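/- Let D be a digraph with n vertices and S ⊆ V(D). If for every pair of distinct vertices u, v ∈ S there is a directed path from u to v and from v to u in D, and if d(u) + d(v) ≥ 2n − 3 for every pair of nonadjacent vertices u, v ∈ S, then D contains a closed directed trail passing through all vertices of S. -/

import Mathlib

/-- A directed walk: consecutive vertices are joined by arcs. -/
def IsDiwalk {V : Type*} (A : V → V → Prop) : List V → Prop
  | [] => True
  | [_] => True
  | a :: b :: l => A a b ∧ IsDiwalk A (b :: l)

/-- The list of arcs traversed by a walk given as a vertex list. -/
def arcList {V : Type*} (l : List V) : List (V × V) := l.zip l.tail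

/-- A directed trail: a directed walk with no repeated arcs. -/
def IsDitrail {V : Type*} (A : V → V → Prop) (l : List V) : Prop :=
  IsDiwalk A l ∧ (arcList l).Nodup

/-- A closed directed trail: a directed trail whose first and last vertices coincide. -/
def IsClosedDitrail {V : Type*} (A : V → V → Prop) (l : List V) : Prop :=
  IsDitrail A l ∧ l.head? = l.getLast?

/-- A directed path from `u` to `v` (no repeated vertices). -/
def IsDipathFrom {V : Type*} (A : V → V → Prop) (u v : V) (l : List V) : Prop :=
  IsDiwalk A l ∧ l.Nodup ∧ l.head? = some u ∧ l.getLast? = some v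

/-- Reachability by a directed path. -/
def DiReach {V : Type*} (A : V → V → Prop) (u v : V) : Prop :=
  ∃ l, IsDipathFrom A u v l

/-!
Closed trails are enlarged one vertex `v` of `S` at a time. Let `H` be the vertex set of a closed
trail that covers part of `S` and misses `v`. If `v` forms a digon with a vertex of `H` (arcs in
both directions), it can be inserted there. Otherwise call `w ∈ H` near if `v` and `w` are joined,
in either direction, by an arc or by a path of length two through a vertex outside `H`. The degree
condition forces each vertex of `S ∩ H` to be near or to form a digon with a near vertex. Hence near
vertices exist, and combined with an escape path between `H` and `v` one of them gives a bypass of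
`H` through `v`. Choose a bypass that replaces a minimal part of a closed trail on `H`: the part
that is kept contains all near vertices, so every vertex of `S ∩ H` that was lost forms a digon with
a vertex that was kept, and can be put back.
-/

/-- The degree of a vertex of the digraph with arc relation `A`: its out-degree plus its
in-degree. -/
noncomputable def diDegree {V : Type*} (A : V → V → Prop) (v : V) : ℕ :=
  {w | A v w}.ncard + {w | A w v}.ncard

/-- `X` and `E` are the vertex set and the arc set of some directed trail from `u` to `v`. -/
inductive HasTrail {V : Type*} (A : V → V → Prop) : V → V → Set V → Set (V × V) → Prop
  | nil (u : V) : HasTrail A u u {u} ∅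
  | cons {u b v : V} {X : Set V} {E : Set (V × V)} (h : A u b) (hn : (u, b) ∉ E)
      (t : HasTrail A b v X E) : HasTrail A u v (insert u X) (insert (u, b) E)

/-- `X` is the vertex set of some closed directed trail. -/
def IsClosedTrailSupport {V : Type*} (A : V → V → Prop) (X : Set V) : Prop :=
  ∃ u E, HasTrail A u u X E

/-- Some closed directed trail with vertex set `H` is composed of a trail from `x` to `y` with arc
set `E` followed by a trail from `y` to `x` with vertex set `R`. The arcs of the first part measure
what is lost, and the vertices of the second what is kept, when the first part is replaced. -/
def SplitsClosedTrail {V : Type*} (A : V → V → Prop) (H : Set V) (x y : V) (E : Set (V × V))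
    (R : Set V) : Prop :=
  ∃ Q F, HasTrail A x y Q E ∧ HasTrail A y x R F ∧ Disjoint E F ∧ Q ∪ R = H

/-- `E` is the arc set of a trail from `x` to `v` none of whose arcs ends in `H` and which visits
`v` only at its end. Trails from `v` to `H` are described as escapes for the reversed arc relation
`flip A`. -/
def IsEscape {V : Type*} (A : V → V → Prop) (H : Set V) (x v : V) (E : Set (V × V)) : Prop :=
  (∃ X, HasTrail A x v X E) ∧ ∀ e ∈ E, e.2 ∉ H ∧ e.1 ≠ v

/-- There is an escape from `x` to `v` whose arcs all start in `H` or end in `v`; if `x ∈ H` and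
`v ∉ H`, this amounts to a path with at most one inner vertex, lying outside `H`. -/
def HasShortEscape {V : Type*} (A : V → V → Prop) (H : Set V) (x v : V) : Prop :=
  ∃ E, IsEscape A H x v E ∧ ∀ e ∈ E, e.1 ∈ H ∨ e.2 = v

/-- The vertices `w` and `v` are joined by a short escape in at least one of the two directions. -/
def IsNear {V : Type*} (A : V → V → Prop) (H : Set V) (v w : V) : Prop :=
  HasShortEscape A H w v ∨ HasShortEscape (flip A) H w v

/-- There is a trail from `x` to `y` that passes `v` once and whose inner vertices avoid `H`. Its
part after `v` is encoded by the reversed trail. -/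
def HasBypass {V : Type*} (A : V → V → Prop) (H : Set V) (x y v : V) : Prop :=
  ∃ E F, IsEscape A H x v E ∧ IsEscape (flip A) H y v F ∧ Disjoint E (Prod.swap ⁻¹' F)

section

variable {V : Type*} {A : V → V → Prop} {u v w x y g h : V} {G H X Y R : Set V}
  {E F : Set (V × V)}

theorem isDiwalk_iff_isChain : ∀ {l : List V}, IsDiwalk A l ↔ l.IsChain A
  | [] => by simp [IsDiwalk]
  | [_] => by simp [IsDiwalk]
  | a :: b :: l => by simp [IsDiwalk, isDiwalk_iff_isChain (l := b :: l)]

theorem DiReach.reverse (hr : DiReach A u v) : DiReach (flip A) v u := by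
  obtain ⟨l, hw, hn, hu, hv⟩ := hr
  refine ⟨l.reverse, isDiwalk_iff_isChain.2 (List.isChain_reverse.2 ?_), List.nodup_reverse.2 hn,
    by rwa [List.head?_reverse], by rwa [List.getLast?_reverse]⟩
  exact isDiwalk_iff_isChain.1 hw

namespace HasTrail

theorem left_mem (t : HasTrail A u v X E) : u ∈ X := by
  cases t <;> simp

theorem right_mem (t : HasTrail A u v X E) : v ∈ X := by
  induction t with
  | nil => rfl
  | cons _ _ _ ih => exact Set.mem_insert_of_mem _ ih

theorem arcs_subset (t : HasTrail A u v X E) : E ⊆ X ×ˢ X := by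
  induction t with
  | nil => simp
  | cons _ _ t ih =>
    rintro e (rfl | he)
    · exact ⟨Set.mem_insert _ _, Set.mem_insert_of_mem _ t.left_mem⟩
    · exact ⟨Set.mem_insert_of_mem _ (ih he).1, Set.mem_insert_of_mem _ (ih he).2⟩

theorem arcs_nonempty (t : HasTrail A u v X E) (huv : u ≠ v) : E.Nonempty := by
  cases t with
  | nil => exact absurd rfl huv
  | cons => exact Set.insert_nonempty _ _

theorem single (h : A u v) : HasTrail A u v {u, v} {(u, v)} := by
  simpa using cons h (Set.notMem_empty _) (nil v)

theorem append (t : HasTrail A u v X E) (t' : HasTrail A v w Y F) (hd : Disjoint E F) :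
    HasTrail A u w (X ∪ Y) (E ∪ F) := by
  induction t with
  | nil => simpa [Set.insert_eq_of_mem t'.left_mem] using t'
  | cons hA hn _ ih =>
    rw [Set.disjoint_insert_left] at hd
    rw [Set.insert_union, Set.insert_union]
    exact cons hA (by simp [hn, hd.1]) (ih t' hd.2)

theorem reverse (t : HasTrail A u v X E) : HasTrail (flip A) v u X (Prod.swap ⁻¹' E) := by
  induction t with
  | nil u => exact nil u
  | @cons u b v X E hA hn t ih =>
    have hd : Disjoint (Prod.swap ⁻¹' E) {(b, u)} := by simpa using hn
    convert ih.append (single (A := flip A) hA) hd using 1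
    · rw [Set.union_insert, Set.union_singleton,
        Set.insert_eq_of_mem (Set.mem_insert_of_mem _ t.left_mem)]
    · ext ⟨a, c⟩
      simp [and_comm]

theorem exists_append_of_mem (t : HasTrail A u v X E) (hg : g ∈ X) :
    ∃ X₁ E₁ X₂ E₂, HasTrail A u g X₁ E₁ ∧ HasTrail A g v X₂ E₂ ∧ Disjoint E₁ E₂ ∧
      X₁ ∪ X₂ = X ∧ E₁ ∪ E₂ = E := by
  induction t with
  | nil u =>
    obtain rfl : g = u := hg
    exact ⟨_, _, _, _, nil g, nil g, by simp, by simp, by simp⟩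
  | @cons u b v X E hA hn t ih =>
    by_cases hgu : g = u
    · subst hgu
      exact ⟨_, _, _, _, nil g, cons hA hn t, by simp, by simp, by simp⟩
    · obtain ⟨X₁, E₁, X₂, E₂, t₁, t₂, hd, rfl, rfl⟩ := ih (hg.resolve_left hgu)
      simp only [Set.mem_union, not_or] at hn
      exact ⟨_, _, _, _, cons hA hn.1 t₁, t₂, by simp [Set.disjoint_insert_left, hn.2, hd],
        Set.insert_union .., Set.insert_union ..⟩

theorem rotate (t : HasTrail A u u X E) (hg : g ∈ X) : HasTrail A g g X E := by
  obtain ⟨X₁, E₁, X₂, E₂, t₁, t₂, hd, rfl, rfl⟩ := t.exists_append_of_mem hg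
  rw [Set.union_comm X₁, Set.union_comm E₁]
  exact t₂.append t₁ hd.symm

theorem exists_list (t : HasTrail A u v X E) :
    ∃ l : List V, IsDitrail A (u :: l) ∧ (u :: l).getLast? = some v ∧
      {z | z ∈ u :: l} = X ∧ {e | e ∈ arcList (u :: l)} = E := by
  induction t with
  | nil u => exact ⟨[], by simp [IsDitrail, IsDiwalk, arcList]⟩
  | @cons u b v X E hA hn t ih =>
    obtain ⟨l, ⟨hwalk, hnodup⟩, hlast, rfl, rfl⟩ := ih
    have harcs : arcList (u :: b :: l) = (u, b) :: arcList (b :: l) := rfl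
    refine ⟨b :: l, ⟨⟨hA, hwalk⟩, ?_⟩, by simpa using hlast, ?_, ?_⟩
    · exact harcs ▸ List.nodup_cons.2 ⟨hn, hnodup⟩
    · ext z
      simp
    · ext e
      simp [harcs]

theorem exists_of_nodup : ∀ {u : V} {l : List V}, IsDiwalk A (u :: l) → (u :: l).Nodup →
    (u :: l).getLast? = some v →
      ∃ E, HasTrail A u v {z | z ∈ u :: l} E ∧ ∀ e ∈ E, e.2 ∈ l ∧ e.1 ≠ v
  | u, [], _, _, hl => by
    obtain rfl : u = v := by simpa using hl
    exact ⟨∅, by simpa using nil u, by simp⟩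
  | u, b :: l, hw, hn, hl => by
    have hl' : (b :: l).getLast? = some v := by simpa using hl
    obtain ⟨hu, hn'⟩ := List.nodup_cons.1 hn
    obtain ⟨E, t, hE⟩ := exists_of_nodup hw.2 hn' hl'
    refine ⟨insert (u, b) E, ?_, ?_⟩
    · convert cons hw.1 (fun he => hu (t.arcs_subset he).1) t using 1
      ext z
      simp
    · rintro e (rfl | he)
      · exact ⟨List.mem_cons_self, fun huv : u = v => hu (huv ▸ List.mem_of_getLast? hl')⟩
      · exact ⟨List.mem_cons_of_mem _ (hE e he).1, (hE e he).2⟩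

end HasTrail

namespace IsClosedTrailSupport

theorem singleton (u : V) : IsClosedTrailSupport A {u} := ⟨u, ∅, .nil u⟩

theorem exists_list (hX : IsClosedTrailSupport A X) :
    ∃ l, IsClosedDitrail A l ∧ {z | z ∈ l} = X := by
  obtain ⟨u, E, t⟩ := hX
  obtain ⟨l, hl, hlast, hX, -⟩ := t.exists_list
  exact ⟨u :: l, ⟨hl, by simpa using hlast.symm⟩, hX⟩

theorem insert_of_digon (hX : IsClosedTrailSupport A X) (hh : h ∈ X) (hhg : A h g) (hgh : A g h) :
    IsClosedTrailSupport A (insert g X) := by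
  by_cases hg : g ∈ X
  · rwa [Set.insert_eq_of_mem hg]
  obtain ⟨u, E, t⟩ := hX
  have hne : h ≠ g := fun e => hg (e ▸ hh)
  have hdetour : HasTrail A h h {h, g} {(h, g), (g, h)} := by
    simpa [Set.pair_comm g h] using HasTrail.cons hhg (by simp [hne]) (.single hgh)
  have hd : Disjoint E {(h, g), (g, h)} := by
    rw [Set.disjoint_right]
    rintro e (rfl | rfl) he
    · exact hg (t.arcs_subset he).2
    · exact hg (t.arcs_subset he).1
  have hvertices : X ∪ {h, g} = insert g X := by
    rw [Set.union_insert, Set.union_singleton, Set.insert_eq_of_mem (Set.mem_insert_of_mem _ hh)]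
  exact ⟨h, _, hvertices ▸ (t.rotate hh).append hdetour hd⟩

theorem union_of_digons (hX : IsClosedTrailSupport A X) (hG : G.Finite)
    (hGX : ∀ g ∈ G, g ∈ X ∨ ∃ w ∈ X, A g w ∧ A w g) : IsClosedTrailSupport A (X ∪ G) := by
  induction G, hG using Set.Finite.induction_on with
  | empty => rwa [Set.union_empty]
  | @insert g G _ _ ih =>
    have hXG := ih fun z hz => hGX z (Set.mem_insert_of_mem _ hz)
    rw [Set.union_insert]
    rcases hGX g (Set.mem_insert _ _) with hg | ⟨w, hw, hgw, hwg⟩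
    · rwa [Set.insert_eq_of_mem (.inl hg)]
    · exact hXG.insert_of_digon (.inl hw) hwg hgw

theorem exists_splitsClosedTrail (hH : IsClosedTrailSupport A H) (hx : x ∈ H) (hy : y ∈ H) :
    ∃ E R, SplitsClosedTrail A H x y E R := by
  obtain ⟨u, E, t⟩ := hH
  obtain ⟨Q, E₁, R, E₂, tQ, tR, hd, hQR, -⟩ := (t.rotate hx).exists_append_of_mem hy
  exact ⟨E₁, R, Q, E₂, tQ, tR, hd, hQR⟩

end IsClosedTrailSupport

theorem SplitsClosedTrail.exists_ssubset (hs : SplitsClosedTrail A H x y E R) (hw : w ∈ H)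
    (hwR : w ∉ R) : (∃ E' ⊂ E, ∃ R', SplitsClosedTrail A H x w E' R') ∧
      ∃ E' ⊂ E, ∃ R', SplitsClosedTrail A H w y E' R' := by
  obtain ⟨Q, F, tQ, tR, hd, rfl⟩ := hs
  obtain ⟨Q₁, E₁, Q₂, E₂, t₁, t₂, hd₁₂, rfl, rfl⟩ :=
    tQ.exists_append_of_mem (hw.resolve_right hwR)
  obtain ⟨hd₁, hd₂⟩ := Set.disjoint_union_left.1 hd
  have hE₁ : E₁.Nonempty := t₁.arcs_nonempty fun e => hwR (e ▸ tR.right_mem)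
  have hE₂ : E₂.Nonempty := t₂.arcs_nonempty fun e => hwR (e ▸ tR.left_mem)
  refine ⟨⟨E₁, ?_, Q₂ ∪ R, Q₁, E₂ ∪ F, t₁, t₂.append tR hd₂,
    Set.disjoint_union_right.2 ⟨hd₁₂, hd₁⟩, (Set.union_assoc ..).symm⟩,
    ⟨E₂, ?_, R ∪ Q₁, Q₂, F ∪ E₁, t₂, tR.append t₁ hd₁.symm,
    Set.disjoint_union_right.2 ⟨hd₂, hd₁₂.symm⟩, ?_⟩⟩
  · exact left_lt_sup.2 fun hle => hE₂.ne_empty (hd₁₂.symm.eq_bot_of_le hle)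
  · exact right_lt_sup.2 fun hle => hE₁.ne_empty (hd₁₂.eq_bot_of_le hle)
  · rw [← Set.union_assoc, Set.union_comm, Set.union_assoc]

theorem exists_isEscape_of_list (hv : v ∉ H) : ∀ {l : List V}, IsDiwalk A l → l.Nodup →
    l.getLast? = some v → (∃ g ∈ l, g ∈ H) → ∃ x ∈ H, ∃ E, IsEscape A H x v E
  | [a], _, _, hl, hH => by
    obtain rfl : a = v := by simpa using hl
    exact absurd hH (by simpa using hv)
  | a :: b :: l, hw, hn, hl, hH => by
    by_cases hH' : ∃ g ∈ b :: l, g ∈ H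
    · exact exists_isEscape_of_list hv hw.2 hn.of_cons (by simpa using hl) hH'
    · obtain ⟨E, t, hE⟩ := HasTrail.exists_of_nodup hw hn hl
      have ha : a ∈ H := (List.exists_mem_cons_iff ..).1 hH |>.resolve_right hH'
      exact ⟨a, ha, E, ⟨_, t⟩, fun e he => ⟨fun heH => hH' ⟨e.2, (hE e he).1, heH⟩, (hE e he).2⟩⟩

theorem DiReach.exists_isEscape (hr : DiReach A g v) (hg : g ∈ H) (hv : v ∉ H) :
    ∃ x ∈ H, ∃ E, IsEscape A H x v E := by
  obtain ⟨l, hw, hn, hhead, hlast⟩ := hr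
  exact exists_isEscape_of_list hv hw hn hlast ⟨g, List.mem_of_head? hhead, hg⟩

namespace HasShortEscape

theorem of_arc (hx : x ∈ H) (hv : v ∉ H) (h : A x v) : HasShortEscape A H x v :=
  ⟨{(x, v)}, ⟨⟨_, .single h⟩, by simpa using ⟨hv, ne_of_mem_of_not_mem hx hv⟩⟩, by simp⟩

theorem of_arc_arc (hx : x ∈ H) (hv : v ∉ H) (hvv : ¬ A v v) (hw : w ∉ H) (hxw : A x w)
    (hwv : A w v) : HasShortEscape A H x v := by
  have hxv : x ≠ v := ne_of_mem_of_not_mem hx hv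
  have hne : w ≠ v := fun e => hvv (e ▸ hwv)
  exact ⟨{(x, w), (w, v)}, ⟨⟨_, .cons hxw (by simp [hne]) (.single hwv)⟩,
    by simp [hxv, hne, hv, hw]⟩, by simp [hx]⟩

end HasShortEscape

theorem IsEscape.hasBypass (hE : IsEscape A H x v E) (hy : HasShortEscape (flip A) H y v) :
    HasBypass A H x y v := by
  obtain ⟨F, hF, hshort⟩ := hy
  refine ⟨E, F, hE, hF, Set.disjoint_left.2 fun e he he' => ?_⟩
  exact (hshort _ he').elim (hE.2 e he).1 (hE.2 e he).2

namespace HasBypass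

theorem reverse (hb : HasBypass A H x y v) : HasBypass (flip A) H y x v := by
  obtain ⟨E, F, hE, hF, hd⟩ := hb
  exact ⟨F, E, hF, hE, Set.disjoint_left.2 fun e he he' => Set.disjoint_left.1 hd he' (by simpa)⟩

theorem left_of_hasShortEscape (hb : HasBypass A H x y v) (hw : HasShortEscape A H w v) :
    HasBypass A H w y v := by
  obtain ⟨E, F, -, hF, -⟩ := hb
  exact (hF.hasBypass (A := flip A) hw).reverse

theorem right_of_hasShortEscape (hb : HasBypass A H x y v)
    (hw : HasShortEscape (flip A) H w v) : HasBypass A H x w v := by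
  obtain ⟨E, F, hE, -, -⟩ := hb
  exact hE.hasBypass hw

theorem exists_hasTrail (hb : HasBypass A H x y v) :
    ∃ X E, HasTrail A x y X E ∧ v ∈ X ∧ Disjoint E (H ×ˢ H) := by
  obtain ⟨E, F, ⟨⟨X, t⟩, hE⟩, ⟨⟨Y, t'⟩, hF⟩, hd⟩ := hb
  refine ⟨X ∪ Y, _, t.append t'.reverse hd, .inl t.right_mem, Set.disjoint_left.2 ?_⟩
  rintro e (he | he) heH
  · exact (hE e he).1 heH.2
  · exact (hF _ he).1 heH.1

end HasBypass

theorem SplitsClosedTrail.exists_isClosedTrailSupport (hs : SplitsClosedTrail A H x y E R)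
    (hb : HasBypass A H x y v) : ∃ X, IsClosedTrailSupport A X ∧ R ⊆ X ∧ v ∈ X := by
  obtain ⟨Q, F, -, tR, -, rfl⟩ := hs
  obtain ⟨X, E', t, hv, hd⟩ := hb.exists_hasTrail
  have hF : F ⊆ (Q ∪ R) ×ˢ (Q ∪ R) :=
    tR.arcs_subset.trans (Set.prod_mono Set.subset_union_right Set.subset_union_right)
  exact ⟨X ∪ R, ⟨x, _, t.append tR (hd.mono_right hF)⟩, Set.subset_union_right, .inl hv⟩

theorem IsClosedTrailSupport.exists_splitsClosedTrail_near [Finite V]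
    (hH : IsClosedTrailSupport A H) (hx : x ∈ H) (hy : y ∈ H) (hb : HasBypass A H x y v) :
    ∃ x' y' E R, SplitsClosedTrail A H x' y' E R ∧ HasBypass A H x' y' v ∧
      ∀ w ∈ H, IsNear A H v w → w ∈ R := by
  let IsReplaceable (E : Set (V × V)) : Prop :=
    ∃ x y R, SplitsClosedTrail A H x y E R ∧ HasBypass A H x y v
  obtain ⟨E₀, R₀, hs₀⟩ := hH.exists_splitsClosedTrail hx hy
  obtain ⟨E, hE⟩ := exists_minimal_of_wellFoundedLT IsReplaceable ⟨E₀, x, y, R₀, hs₀, hb⟩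
  obtain ⟨x', y', R, hs, hb'⟩ := hE.prop
  refine ⟨x', y', E, R, hs, hb', fun w hw hnear => ?_⟩
  by_contra hwR
  obtain ⟨⟨E₁, hlt₁, R₁, hs₁⟩, ⟨E₂, hlt₂, R₂, hs₂⟩⟩ := hs.exists_ssubset hw hwR
  rcases hnear with hwv | hvw
  · exact hE.not_prop_of_lt hlt₂ ⟨w, y', R₂, hs₂, hb'.left_of_hasShortEscape hwv⟩
  · exact hE.not_prop_of_lt hlt₁ ⟨x', w, R₁, hs₁, hb'.right_of_hasShortEscape hvw⟩

theorem exists_hasBypass (hsv : ∃ s ∈ H, DiReach A s v) (hvs : ∃ s ∈ H, DiReach A v s) (hv : v ∉ H)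
    (hw : w ∈ H) (hnear : IsNear A H v w) : ∃ x ∈ H, ∃ y ∈ H, HasBypass A H x y v := by
  rcases hnear with hwv | hvw
  · obtain ⟨s, hs, hr⟩ := hvs
    obtain ⟨y, hy, F, hF⟩ := hr.reverse.exists_isEscape hs hv
    exact ⟨w, hw, y, hy, (hF.hasBypass (A := flip A) hwv).reverse⟩
  · obtain ⟨s, hs, hr⟩ := hsv
    obtain ⟨x, hx, E, hE⟩ := hr.exists_isEscape hs hv
    exact ⟨x, hx, w, hw, hE.hasBypass hvw⟩

open Classical in
theorem diDegree_eq_sum [Fintype V] (v : V) :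
    diDegree A v = ∑ w, ((if A v w then 1 else 0) + if A w v then 1 else 0) := by
  simp only [diDegree, Set.ncard_eq_toFinset_card', Set.toFinset_ofPred, Finset.card_filter,
    Finset.sum_add_distrib]

-- Otherwise each vertex other than `v` and `g` is joined to these two by at most two arcs, and the
-- degree sum is at most `2 * (n - 2)`.
theorem exists_digon_of_le_diDegree_add [Fintype V] (hvv : ¬ A v v) (hgg : ¬ A g g)
    (hne : v ≠ g) (hvg : ¬ A v g) (hgv : ¬ A g v)
    (hdeg : 2 * Fintype.card V - 3 ≤ diDegree A v + diDegree A g) :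
    ∃ w, A v w ∧ A w v ∧ (A g w ∨ A w g) ∨ A g w ∧ A w g ∧ (A v w ∨ A w v) := by
  classical
  by_contra! hno
  let c (w : V) : ℕ := ((if A v w then 1 else 0) + if A w v then 1 else 0) +
    ((if A g w then 1 else 0) + if A w g then 1 else 0)
  have hcv : c v = 0 := by simp [c, hvv, hvg, hgv]
  have hcg : c g = 0 := by simp [c, hgg, hvg, hgv]
  have hc (w : V) : c w ≤ 2 := by
    have := hno w
    grind
  have hsum : diDegree A v + diDegree A g = ∑ w ∈ {v, g}ᶜ, c w := by
    rw [diDegree_eq_sum, diDegree_eq_sum, ← Finset.sum_add_distrib,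
      ← Finset.sum_compl_add_sum {v, g} c, Finset.sum_pair hne, hcv, hcg, add_zero, add_zero]
  have hle : ∑ w ∈ {v, g}ᶜ, c w ≤ _ := Finset.sum_le_card_nsmul _ c 2 fun w _ => hc w
  have hcard : ({v, g} : Finset V).card ≤ Fintype.card V := Finset.card_le_univ _
  rw [Finset.card_compl, Finset.card_pair hne, smul_eq_mul] at hle
  rw [Finset.card_pair hne] at hcard
  omega

theorem isNear_or_exists_digon [Fintype V] (hvv : ¬ A v v) (hgg : ¬ A g g) (hv : v ∉ H)
    (hvH : ∀ w ∈ H, A v w → ¬ A w v) (hg : g ∈ H)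
    (hdeg : ¬ A v g → ¬ A g v → 2 * Fintype.card V - 3 ≤ diDegree A v + diDegree A g) :
    IsNear A H v g ∨ ∃ w ∈ H, IsNear A H v w ∧ A g w ∧ A w g := by
  have near_of_out {z : V} (hz : z ∈ H) (h : A v z) : IsNear A H v z := .inr (.of_arc hz hv h)
  have near_of_in {z : V} (hz : z ∈ H) (h : A z v) : IsNear A H v z := .inl (.of_arc hz hv h)
  by_cases hvg : A v g
  · exact .inl (near_of_out hg hvg)
  by_cases hgv : A g v
  · exact .inl (near_of_in hg hgv)
  have hne : v ≠ g := (ne_of_mem_of_not_mem hg hv).symm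
  obtain ⟨w, hw⟩ := exists_digon_of_le_diDegree_add hvv hgg hne hvg hgv (hdeg hvg hgv)
  by_cases hwH : w ∈ H
  · obtain ⟨hgw, hwg, hvw⟩ := hw.resolve_left fun h => hvH w hwH h.1 h.2.1
    exact .inr ⟨w, hwH, hvw.elim (near_of_out hwH) (near_of_in hwH), hgw, hwg⟩
  · have hpath : A g w ∧ A w v ∨ A v w ∧ A w g := by tauto
    rcases hpath with ⟨hgw, hwv⟩ | ⟨hvw, hwg⟩
    · exact .inl (.inl (.of_arc_arc hg hv hvv hwH hgw hwv))
    · exact .inl (.inr (.of_arc_arc hg hv hvv hwH hwg hvw))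

theorem IsClosedTrailSupport.exists_insert_subset [Fintype V] (hH : IsClosedTrailSupport A H)
    (hirr : ∀ z, ¬ A z z) (hGH : G ⊆ H) (hsv : ∃ s ∈ G, DiReach A s v)
    (hvs : ∃ s ∈ G, DiReach A v s)
    (hdeg : ∀ g ∈ G, v ≠ g → ¬ A v g → ¬ A g v →
      2 * Fintype.card V - 3 ≤ diDegree A v + diDegree A g) :
    ∃ X, IsClosedTrailSupport A X ∧ insert v G ⊆ X := by
  by_cases hv : v ∈ H
  · exact ⟨H, hH, Set.insert_subset hv hGH⟩
  by_cases hdigon : ∃ w ∈ H, A v w ∧ A w v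
  · obtain ⟨w, hw, hvw, hwv⟩ := hdigon
    exact ⟨_, hH.insert_of_digon hw hwv hvw, Set.insert_subset_insert hGH⟩
  push Not at hdigon
  have hnear : ∀ g ∈ G, IsNear A H v g ∨ ∃ w ∈ H, IsNear A H v w ∧ A g w ∧ A w g := fun g hg =>
    isNear_or_exists_digon (hirr v) (hirr g) hv hdigon (hGH hg)
      (hdeg g hg (ne_of_mem_of_not_mem (hGH hg) hv).symm)
  obtain ⟨x, hx, y, hy, hb⟩ : ∃ x ∈ H, ∃ y ∈ H, HasBypass A H x y v := by
    obtain ⟨w, hw, hwv⟩ : ∃ w ∈ H, IsNear A H v w := by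
      obtain ⟨s, hs, -⟩ := hsv
      exact (hnear s hs).elim (fun h => ⟨s, hGH hs, h⟩) fun ⟨w, hw, h, _⟩ => ⟨w, hw, h⟩
    exact exists_hasBypass (hsv.imp fun _ h => ⟨hGH h.1, h.2⟩) (hvs.imp fun _ h => ⟨hGH h.1, h.2⟩)
      hv hw hwv
  obtain ⟨x', y', E, R, hs, hb', hR⟩ := hH.exists_splitsClosedTrail_near hx hy hb
  obtain ⟨X, hX, hRX, hvX⟩ := hs.exists_isClosedTrailSupport hb'
  refine ⟨X ∪ G, hX.union_of_digons G.toFinite fun g hg => ?_, Set.insert_subset (.inl hvX)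
    Set.subset_union_right⟩
  exact (hnear g hg).imp (fun h => hRX (hR g (hGH hg) h))
    fun ⟨w, hw, hwv, hgw⟩ => ⟨w, hRX (hR w hw hwv), hgw⟩

theorem exists_isClosedTrailSupport_superset [Fintype V] {S : Set V} (hirr : ∀ z, ¬ A z z)
    (hS : S.Nonempty) (hreach : S.Pairwise (DiReach A))
    (hdeg : S.Pairwise fun u v => ¬ A u v → ¬ A v u →
      2 * Fintype.card V - 3 ≤ diDegree A u + diDegree A v) :
    ∃ X, IsClosedTrailSupport A X ∧ S ⊆ X := by
  induction S, S.toFinite using Set.Finite.induction_on with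
  | empty => simp at hS
  | @insert v S hv _ ih =>
    rcases S.eq_empty_or_nonempty with rfl | ⟨s, hs⟩
    · exact ⟨{v}, .singleton v, by simp⟩
    have hsub : S ⊆ insert v S := Set.subset_insert v S
    have hvmem : v ∈ insert v S := Set.mem_insert v S
    have hvs : v ≠ s := (ne_of_mem_of_not_mem hs hv).symm
    obtain ⟨H, hH, hSH⟩ := ih ⟨s, hs⟩ (hreach.mono hsub) (hdeg.mono hsub)
    exact hH.exists_insert_subset hirr hSH ⟨s, hs, hreach (hsub hs) hvmem hvs.symm⟩
      ⟨s, hs, hreach hvmem (hsub hs) hvs⟩ fun g hg => hdeg hvmem (hsub hg)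

end

/-- degree condition for a subset `S` to be closed-trailable. -/
theorem stmt_1 {V : Type*} [Fintype V] (n : ℕ) (hn : Fintype.card V = n)
    (A : V → V → Prop) (hirr : ∀ v, ¬ A v v) (S : Set V)
    (hstrong : ∀ u ∈ S, ∀ v ∈ S, u ≠ v → DiReach A u v ∧ DiReach A v u)
    (hdeg : ∀ u ∈ S, ∀ v ∈ S, u ≠ v → ¬ A u v → ¬ A v u →
      2 * n - 3 ≤ ({w | A u w}.ncard + {w | A w u}.ncard) +
        ({w | A v w}.ncard + {w | A w v}.ncard)) :
    ∃ l : List V, IsClosedDitrail A l ∧ ∀ v ∈ S, v ∈ l := by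
  subst hn
  rcases S.eq_empty_or_nonempty with rfl | hS
  · exact ⟨[], by simp [IsClosedDitrail, IsDitrail, IsDiwalk, arcList]⟩
  obtain ⟨X, hX, hSX⟩ := exists_isClosedTrailSupport_superset hirr hS
    (fun u hu v hv huv => (hstrong u hu v hv huv).1) (fun u hu v hv => hdeg u hu v hv)
  obtain ⟨l, hl, rfl⟩ := hX.exists_list
  exact ⟨l, hl, fun v hv => hSX hv⟩
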